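/- Failure of the convex Positivstellensatz for non-monic pencils: let L = [[x₂, x₁],[x₁, 0]] ∈ M₂(ℂ⟨x₁,x₂⟩), a hermitian pencil with zero constant term. Although x₁(X) ⪰ 0 for every tuple X in the free spectrahedron D_L, there do not exist finitely many s₁,…,s_M ∈ ℂ⟨x₁,x₂⟩ and v₁,…,v_N ∈ ℂ⟨x₁,x₂⟩^{2×1} such that x₁ = Σ_{i=1}^M sᵢ*sᵢ + Σ_{j=1}^N vⱼ*Lvⱼ in ℂ⟨x₁,x₂⟩. -/

import Mathlib

open scoped Kronecker Matrix ComplexOrder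

/-- Noncommutative polynomials: the free `ℂ`-algebra `ℂ⟨x₁,…,xₙ⟩` on `n` generators. -/
abbrev FreeAlg (n : ℕ) := FreeAlgebra ℂ (Fin n)

/-- Evaluation of a matrix of noncommutative polynomials at an `n`-tuple of `k × k` complex
matrices, i.e. the image under `id ⊗ ev_X`. -/
noncomputable def evalM {n k : ℕ} {I J : Type*} (f : Matrix I J (FreeAlg n))
    (X : Fin n → Matrix (Fin k) (Fin k) ℂ) : Matrix (I × Fin k) (J × Fin k) ℂ :=
  fun p q => FreeAlgebra.lift ℂ X (f p.1 q.1) p.2 q.2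

/-- The conjugate-linear involutive anti-automorphism on `ℂ⟨x⟩` fixing the generators:
reverse each word and conjugate each coefficient. -/
noncomputable def nstar {n : ℕ} (a : FreeAlg n) : FreeAlg n :=
  (FreeAlgebra.equivMonoidAlgebraFreeMonoid).symm
    (MonoidAlgebra.ofCoeff (Finsupp.mapDomain FreeMonoid.reverse
      (Finsupp.mapRange (starRingEnd ℂ) (map_zero _)
        ((FreeAlgebra.equivMonoidAlgebraFreeMonoid) a).coeff)))

/-- Conjugate-transpose of a matrix over `ℂ⟨x⟩`. -/
noncomputable def adjM {n : ℕ} {I J : Type*} (f : Matrix I J (FreeAlg n)) :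
    Matrix J I (FreeAlg n) :=
  fun i j => nstar (f j i)

/-- A matrix `f` over `ℂ⟨x⟩` is hermitian if `f = f*`. -/
def IsHermPoly {n : ℕ} {I : Type*} (f : Matrix I I (FreeAlg n)) : Prop :=
  ∀ i j, f i j = nstar (f j i)

/-- Evaluation `L(X) = A₀ ⊗ I + ∑ⱼ Aⱼ ⊗ Xⱼ` of a linear matrix pencil at a matrix tuple. -/
noncomputable def pencilK {n d k : ℕ} (A0 : Matrix (Fin d) (Fin d) ℂ)
    (A : Fin n → Matrix (Fin d) (Fin d) ℂ) (X : Fin n → Matrix (Fin k) (Fin k) ℂ) :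
    Matrix (Fin d × Fin k) (Fin d × Fin k) ℂ :=
  A0 ⊗ₖ (1 : Matrix (Fin k) (Fin k) ℂ) + ∑ j, A j ⊗ₖ X j

/-- Evaluation `L(X) = I ⊗ I + ∑ⱼ Aⱼ ⊗ Xⱼ` of a monic linear matrix pencil. -/
noncomputable def monicK {n d k : ℕ} (A : Fin n → Matrix (Fin d) (Fin d) ℂ)
    (X : Fin n → Matrix (Fin k) (Fin k) ℂ) : Matrix (Fin d × Fin k) (Fin d × Fin k) ℂ :=
  1 + ∑ j, A j ⊗ₖ X j

/-- The monic pencil `I + ∑ⱼ Aⱼ xⱼ` as a matrix of noncommutative polynomials. -/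
noncomputable def monicPoly {n e : ℕ} (A : Fin n → Matrix (Fin e) (Fin e) ℂ) :
    Matrix (Fin e) (Fin e) (FreeAlg n) :=
  1 + ∑ j, (A j).map (fun c => c • FreeAlgebra.ι ℂ j)

/-- The subspace of noncommutative polynomials of degree at most `δ`:
the `ℂ`-linear span of products of at most `δ` generators. -/
noncomputable def degLE (n δ : ℕ) : Submodule ℂ (FreeAlg n) :=
  Submodule.span ℂ
    {a | ∃ w : List (Fin n), w.length ≤ δ ∧ a = (w.map (FreeAlgebra.ι ℂ)).prod}

/-- A matrix over `ℂ⟨x⟩` has degree at most `δ` if each entry does. -/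
def matDegLE {n : ℕ} {I J : Type*} (f : Matrix I J (FreeAlg n)) (δ : ℕ) : Prop :=
  ∀ i j, f i j ∈ degLE n δ

/-- The degree of a matrix of noncommutative polynomials: the least `δ` such that every entry
lies in the span of words of length at most `δ`. -/
noncomputable def matDeg {n : ℕ} {I J : Type*} (f : Matrix I J (FreeAlg n)) : ℕ :=
  sInf {δ | matDegLE f δ}

/-- Evaluation of `f` at the zero scalar tuple, `f(0) ∈ M_d(ℂ)`. -/
noncomputable def evalZero {n : ℕ} {I J : Type*} (f : Matrix I J (FreeAlg n)) :
    Matrix I J ℂ :=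
  f.map (⇑(FreeAlgebra.lift ℂ (fun _ : Fin n => (0 : ℂ))))

/-- The hermitian pencil `L = [[x₂, x₁], [x₁, 0]]` with zero constant term. -/
noncomputable def Lbad : Matrix (Fin 2) (Fin 2) (FreeAlg 2) :=
  !![FreeAlgebra.ι ℂ (1 : Fin 2), FreeAlgebra.ι ℂ (0 : Fin 2);
     FreeAlgebra.ι ℂ (0 : Fin 2), 0]

/-- dual-number evaluation `x₁ ↦ ε`, `x₂ ↦ 1`. -/
noncomputable def phi : FreeAlg 2 →ₐ[ℂ] DualNumber ℂ :=
  FreeAlgebra.lift ℂ ![DualNumber.eps, 1]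

theorem phi_word_real (w : FreeMonoid (Fin 2)) :
    (starRingEnd ℂ) (FreeMonoid.lift ![DualNumber.eps, (1 : DualNumber ℂ)] w).fst
      = (FreeMonoid.lift ![DualNumber.eps, (1 : DualNumber ℂ)] w).fst ∧
    (starRingEnd ℂ) (FreeMonoid.lift ![DualNumber.eps, (1 : DualNumber ℂ)] w).snd
      = (FreeMonoid.lift ![DualNumber.eps, (1 : DualNumber ℂ)] w).snd := by
  induction w using FreeMonoid.inductionOn' with
  | one => simp
  | of_mul i w ih =>
    fin_cases i <;> simp [ih.1, ih.2]

theorem phi_word_reverse (w : FreeMonoid (Fin 2)) :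
    FreeMonoid.lift ![DualNumber.eps, (1 : DualNumber ℂ)] w.reverse
      = FreeMonoid.lift ![DualNumber.eps, (1 : DualNumber ℂ)] w := by
  induction w using FreeMonoid.inductionOn' with
  | one => rfl
  | of_mul i w ih =>
    rw [FreeMonoid.reverse_mul, map_mul, map_mul, ih, mul_comm, FreeMonoid.reverse_of]

theorem phi_symm_single (w : FreeMonoid (Fin 2)) (c : ℂ) :
    phi (FreeAlgebra.equivMonoidAlgebraFreeMonoid.symm (MonoidAlgebra.single w c))
      = c • FreeMonoid.lift ![DualNumber.eps, (1 : DualNumber ℂ)] w := by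
  have h : (phi.comp (FreeAlgebra.equivMonoidAlgebraFreeMonoid (R := ℂ) (X := Fin 2)).symm.toAlgHom)
      = MonoidAlgebra.lift ℂ (DualNumber ℂ) (FreeMonoid (Fin 2))
        (FreeMonoid.lift ![DualNumber.eps, (1 : DualNumber ℂ)]) := by
    refine MonoidAlgebra.algHom_ext' ?_ (by ext)
    ext i <;> simp [phi, FreeAlgebra.equivMonoidAlgebraFreeMonoid]
  have := DFunLike.congr_fun h (MonoidAlgebra.single w c)
  simpa using this

theorem phi_nstar (a : FreeAlg 2) :
    (phi (nstar a)).fst = (starRingEnd ℂ) (phi a).fst ∧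
    (phi (nstar a)).snd = (starRingEnd ℂ) (phi a).snd := by
  obtain ⟨f, rfl⟩ := (FreeAlgebra.equivMonoidAlgebraFreeMonoid (R := ℂ) (X := Fin 2)).symm.surjective a
  induction f using MonoidAlgebra.induction_linear with
  | zero => simp [nstar]
  | add f g hf hg =>
    have h : nstar (FreeAlgebra.equivMonoidAlgebraFreeMonoid.symm (f + g)) =
      nstar (FreeAlgebra.equivMonoidAlgebraFreeMonoid.symm f) +
      nstar (FreeAlgebra.equivMonoidAlgebraFreeMonoid.symm g) := by
      simp only [nstar, AlgEquiv.apply_symm_apply, MonoidAlgebra.coeff_add]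
      rw [Finsupp.mapRange_add (fun x y => map_add _ x y), Finsupp.mapDomain_add,
        MonoidAlgebra.ofCoeff_add, map_add]
    rw [h]
    simp [hf.1, hf.2, hg.1, hg.2]
  | single w c =>
    have h : nstar (FreeAlgebra.equivMonoidAlgebraFreeMonoid.symm (MonoidAlgebra.single w c)) =
      FreeAlgebra.equivMonoidAlgebraFreeMonoid.symm
        (MonoidAlgebra.single w.reverse ((starRingEnd ℂ) c)) := by
      simp only [nstar, AlgEquiv.apply_symm_apply, MonoidAlgebra.coeff_single]
      rw [Finsupp.mapRange_single, Finsupp.mapDomain_single, MonoidAlgebra.ofCoeff_single]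
    rw [h, phi_symm_single, phi_symm_single, phi_word_reverse]
    simp [(phi_word_real w).1, (phi_word_real w).2]

theorem lbad_zero (k : ℕ) (X : Fin 2 → Matrix (Fin k) (Fin k) ℂ)
    (h : (evalM Lbad X).PosSemidef) : X 0 = 0 := by
  ext p q
  have h2 := (h.submatrix ![((0 : Fin 2), p), (1, q)])
  have hd := h2.det_nonneg
  have hh := h2.isHermitian.apply 0 1
  rw [Matrix.det_fin_two] at hd
  rw [← hh] at hd
  simp [evalM, Lbad] at hd hh
  have : X 0 q p = 0 := by
    rw [Complex.conj_mul'] at hd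
    have h3 : ‖X 0 q p‖ ^ 2 ≤ 0 := by exact_mod_cast hd
    have h4 : ‖X 0 q p‖ = 0 := by nlinarith [norm_nonneg (X 0 q p)]
    exact norm_eq_zero.mp h4
  rw [← hh, this]; simp

/-- failure of the convex Positivstellensatz for non-monic pencils: although
`x₁ ⪰ 0` on `D_L` for `L = [[x₂, x₁], [x₁, 0]]`, there is no certificate
`x₁ = ∑ᵢ sᵢ*sᵢ + ∑ⱼ vⱼ*Lvⱼ`. -/
theorem no_positivstellensatz_for_nonmonic_pencil :
    (∀ (k : ℕ) (X : Fin 2 → Matrix (Fin k) (Fin k) ℂ), (∀ j, (X j).IsHermitian) →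
      (evalM Lbad X).PosSemidef → (X 0).PosSemidef) ∧
    ¬ ∃ (M N : ℕ) (s : Fin M → FreeAlg 2) (v : Fin N → Matrix (Fin 2) (Fin 1) (FreeAlg 2)),
      FreeAlgebra.ι ℂ (0 : Fin 2) =
        ∑ i, nstar (s i) * s i + ∑ j, (adjM (v j) * Lbad * v j) 0 0 := by
  refine ⟨fun k X _ h => by rw [lbad_zero k X h]; exact Matrix.PosSemidef.zero, ?_⟩
  rintro ⟨M, N, s, v, h⟩
  have h' := congrArg phi h
  have e0 : phi (FreeAlgebra.ι ℂ 0) = DualNumber.eps := by simp [phi]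
  have e1 : phi (FreeAlgebra.ι ℂ 1) = 1 := by simp [phi]
  simp only [map_add, map_sum, map_mul, e0, e1, Matrix.mul_apply, Fin.sum_univ_two, adjM, Lbad,
    Matrix.of_apply, Matrix.cons_val', Matrix.cons_val_zero, Matrix.cons_val_one,
    Matrix.cons_val_fin_one, map_zero, mul_zero, add_zero, mul_one] at h'
  have hf := congrArg TrivSqZeroExt.fst h'
  have hs := congrArg TrivSqZeroExt.snd h'
  simp only [TrivSqZeroExt.fst_add, TrivSqZeroExt.fst_sum, TrivSqZeroExt.fst_mul,
    DualNumber.fst_eps, mul_zero, add_zero, zero_mul, (phi_nstar _).1, Complex.conj_mul'] at hf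
  have hf' : 0 = ∑ i, ‖(phi (s i)).fst‖ ^ 2 + ∑ j, ‖(phi (v j 0 0)).fst‖ ^ 2 := by
    exact_mod_cast hf
  have p1 : 0 ≤ ∑ i, ‖(phi (s i)).fst‖ ^ 2 := Finset.sum_nonneg fun _ _ => by positivity
  have p2 : 0 ≤ ∑ j, ‖(phi (v j 0 0)).fst‖ ^ 2 := Finset.sum_nonneg fun _ _ => by positivity
  have z1 : ∑ i, ‖(phi (s i)).fst‖ ^ 2 = 0 := by linarith
  have z2 : ∑ j, ‖(phi (v j 0 0)).fst‖ ^ 2 = 0 := by linarith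
  rw [Finset.sum_eq_zero_iff_of_nonneg (fun _ _ => by positivity)] at z1 z2
  have s0 : ∀ i, (phi (s i)).fst = 0 := fun i => by simpa using z1 i (Finset.mem_univ i)
  have v0 : ∀ j, (phi (v j 0 0)).fst = 0 := fun j => by simpa using z2 j (Finset.mem_univ j)
  simp [(phi_nstar _).1, s0, v0, TrivSqZeroExt.snd_sum] at hs
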